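/- arXiv:1606.04850 — 2 statements merged into one kernel-verified Lean document; each statement's English description precedes it below -/
import Mathlib

section
/- The series ∑_{n=0}^∞ ζ(2n)/((2n+3)·4^n) equals -(1/2)·log 2 + 9ζ(3)/(4π²). -/
open Real

/-! For `0 < y < π` the partial fraction expansion of the cotangent, with each fraction expanded
into a geometric series, gives `∑ ζ(2n) (y / π)²ⁿ = -(y / 2) cot y`. Multiplying by `y²` and
integrating over `[0, π / 2]` turns the series into `-(4 / π³) ∫ y³ cot y dy`.

Since `∫ sin (2nx) cot x dx = π / 2` over `[0, π / 2]` for every `n ≥ 1`, a sine series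
`∑ aₙ sin (2nx)` with `∑ n |aₙ| < ∞` has integral `(π / 2) ∑ aₙ` against `cot x`. Applied to
`∑ (-1)ⁿ sin (2nx) / n³ = (2 / 3) x³ - (π² / 6) x`, this expresses `∫ x³ cot x dx` in terms of
`ζ(3)` and `∫ x cot x dx`, and the latter is `-∫ log (sin x) dx = (π / 2) log 2` by parts. -/

open Set MeasureTheory

section ZetaSums

theorem hasSum_one_div_nat_cpow {s : ℂ} (hs : 1 < s.re) :
    HasSum (fun n : ℕ ↦ 1 / (n : ℂ) ^ s) (riemannZeta s) :=
  (Complex.summable_one_div_nat_cpow.mpr hs).hasSum_iff.mpr (zeta_eq_tsum_one_div_nat_cpow hs).symm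

theorem hasSum_one_div_nat_add_one_pow {m : ℕ} (hm : 1 < m) :
    HasSum (fun k : ℕ ↦ 1 / ((k : ℂ) + 1) ^ m) (riemannZeta m) := by
  have h := (hasSum_nat_add_iff' 1).mpr (hasSum_one_div_nat_cpow (s := m) (by simpa using hm))
  simpa [show m ≠ 0 by lia] using h

theorem hasSum_neg_one_pow_div_nat_cpow {s : ℂ} (hs : 1 < s.re) :
    HasSum (fun n : ℕ ↦ (-1) ^ n / (n : ℂ) ^ s) ((2 / 2 ^ s - 1) * riemannZeta s) := by
  have h := hasSum_one_div_nat_cpow hs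
  -- Adding `∑ 1 / n ^ s` cancels the odd terms and doubles the even ones.
  have heven : HasSum (fun n : ℕ ↦ ((-1) ^ n + 1) / (n : ℂ) ^ s)
      (2 / 2 ^ s * riemannZeta s) := by
    rw [← (mul_right_injective₀ (two_ne_zero' ℕ)).hasSum_iff]
    · convert! h.mul_left (2 / 2 ^ s) using 1
      funext n
      have hpow : ((2 * n : ℕ) : ℂ) ^ s = 2 ^ s * (n : ℂ) ^ s := by
        exact_mod_cast Complex.natCast_mul_natCast_cpow 2 n s
      simp only [Function.comp_apply, hpow, pow_mul, neg_one_sq, one_pow]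
      ring
    · intro n hn
      have hodd : Odd n := by
        rw [← Nat.not_even_iff_odd, even_iff_exists_two_mul]
        exact fun ⟨m, hm⟩ ↦ hn ⟨m, hm.symm⟩
      simp [hodd.neg_one_pow]
  convert! heven.sub h using 1
  · funext n
    ring
  · ring

end ZetaSums

section GeneratingFunction

theorem mem_integerComplement_of_norm_lt_one {z : ℂ} (hz₀ : z ≠ 0) (hz : ‖z‖ < 1) :
    z ∈ Complex.integerComplement := by
  rintro ⟨m, rfl⟩
  rw [Complex.norm_intCast] at hz
  exact hz₀ (by exact_mod_cast Int.abs_lt_one_iff.mp (by exact_mod_cast hz))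

theorem hasSum_sq_div_nat_add_one_sq_sub_sq {z : ℂ} (hz : z ∈ Complex.integerComplement) :
    HasSum (fun k : ℕ ↦ z ^ 2 / (((k : ℂ) + 1) ^ 2 - z ^ 2))
      (1 / 2 - π * z / 2 * Complex.cot (π * z)) := by
  have hz₀ : z ≠ 0 := Complex.integerComplement.ne_zero hz
  have h := (summable_cotTerm hz).hasSum.mul_left (-z / 2)
  rw [← cot_series_rep' hz] at h
  convert! h using 1
  · funext k
    have hsq : ((k : ℂ) + 1) ^ 2 - z ^ 2 ≠ 0 := by
      rw [sub_ne_zero]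
      exact_mod_cast (Complex.integerComplement_pow_two_ne_pow_two hz (k + 1)).symm
    rw [cotTerm_identity hz,
      show (z + (k + 1)) * (z - (k + 1)) = -(((k : ℂ) + 1) ^ 2 - z ^ 2) by ring]
    field_simp
  · field_simp
    ring

theorem hasSum_div_pow_two_mul_succ {z c : ℂ} (hzc : ‖z‖ < ‖c‖) :
    HasSum (fun n : ℕ ↦ (z / c) ^ (2 * (n + 1))) (z ^ 2 / (c ^ 2 - z ^ 2)) := by
  have hc : c ≠ 0 := norm_pos_iff.mp ((norm_nonneg z).trans_lt hzc)
  have hlt : ‖(z / c) ^ 2‖ < 1 := by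
    rw [norm_pow, norm_div]
    exact pow_lt_one₀ (by positivity) ((div_lt_one (by positivity)).mpr hzc) two_ne_zero
  convert! (hasSum_geometric_of_norm_lt_one hlt).mul_left ((z / c) ^ 2) using 1
  · funext n
    ring
  · rw [div_pow, one_sub_div (pow_ne_zero 2 hc), inv_div, div_mul_div_comm,
      mul_comm (c ^ 2), mul_div_mul_right _ _ (pow_ne_zero 2 hc)]

theorem summable_div_nat_add_one_pow_two_mul_succ {z : ℂ} (hz : ‖z‖ < 1) :
    Summable fun p : ℕ × ℕ ↦ (z / ((p.1 : ℂ) + 1)) ^ (2 * (p.2 + 1)) := by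
  have hinv : Summable fun k : ℕ ↦ 1 / ((k : ℝ) + 1) ^ 2 := by
    exact_mod_cast (summable_nat_add_iff 1).mpr (Real.summable_one_div_nat_pow.mpr one_lt_two)
  have hgeom : Summable fun n : ℕ ↦ (‖z‖ ^ 2) ^ n :=
    summable_geometric_of_lt_one (by positivity) (pow_lt_one₀ (norm_nonneg z) hz two_ne_zero)
  refine .of_norm_bounded (hinv.mul_of_nonneg hgeom (fun _ ↦ by positivity)
    fun _ ↦ by positivity) fun ⟨k, n⟩ ↦ ?_
  have hk : ‖(k : ℂ) + 1‖ = k + 1 := by exact_mod_cast Complex.norm_natCast (k + 1)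
  calc ‖(z / ((k : ℂ) + 1)) ^ (2 * (n + 1))‖
      = 1 / ((k : ℝ) + 1) ^ (2 * (n + 1)) * ‖z‖ ^ (2 * (n + 1)) := by
        rw [norm_pow, norm_div, hk, div_pow, one_div_mul_eq_div]
    _ ≤ 1 / ((k : ℝ) + 1) ^ 2 * ‖z‖ ^ (2 * n) := by
        gcongr 1 / ?_ * ?_
        · exact pow_le_pow_right₀ (by simp) (by lia)
        · exact pow_le_pow_of_le_one (norm_nonneg z) hz.le (by lia)
    _ = 1 / ((k : ℝ) + 1) ^ 2 * (‖z‖ ^ 2) ^ n := by rw [pow_mul]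

theorem hasSum_riemannZeta_two_mul_mul_pow {z : ℂ} (hz₀ : z ≠ 0) (hz : ‖z‖ < 1) :
    HasSum (fun n : ℕ ↦ riemannZeta (2 * n) * z ^ (2 * n))
      (-(π * z / 2 * Complex.cot (π * z))) := by
  have hsum := summable_div_nat_add_one_pow_two_mul_succ hz
  have hrow (k : ℕ) : HasSum (fun n : ℕ ↦ (z / ((k : ℂ) + 1)) ^ (2 * (n + 1)))
      (z ^ 2 / (((k : ℂ) + 1) ^ 2 - z ^ 2)) := by
    refine hasSum_div_pow_two_mul_succ (hz.trans_le ?_)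
    rw [show ‖(k : ℂ) + 1‖ = k + 1 by exact_mod_cast Complex.norm_natCast (k + 1)]
    simp
  have hcol (n : ℕ) : HasSum (fun k : ℕ ↦ (z / ((k : ℂ) + 1)) ^ (2 * (n + 1)))
      (riemannZeta (2 * (n + 1 : ℕ)) * z ^ (2 * (n + 1))) := by
    have h := hasSum_one_div_nat_add_one_pow (m := 2 * (n + 1)) (by lia)
    simpa [div_pow, div_eq_inv_mul, mul_pow] using h.mul_right (z ^ (2 * (n + 1)))
  have htail : HasSum (fun n : ℕ ↦ riemannZeta (2 * (n + 1 : ℕ)) * z ^ (2 * (n + 1)))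
      (1 / 2 - π * z / 2 * Complex.cot (π * z)) := by
    have hcot := hasSum_sq_div_nat_add_one_sq_sub_sq (mem_integerComplement_of_norm_lt_one hz₀ hz)
    rw [← (hsum.hasSum.prod_fiberwise hrow).unique hcot]
    exact ((Equiv.prodComm ℕ ℕ).hasSum_iff.mpr hsum.hasSum).prod_fiberwise hcol
  convert! HasSum.zero_add (f := fun n : ℕ ↦ riemannZeta (2 * n) * z ^ (2 * n)) htail using 1
  norm_num [riemannZeta_zero]
  ring

end GeneratingFunction

section CotangentIntegrals

theorem sinc_pos_of_mem_Ico {x : ℝ} (hx : x ∈ Ico 0 π) : 0 < sinc x := by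
  rcases hx.1.eq_or_lt with rfl | hpos
  · simp
  · rw [sinc_of_ne_zero hpos.ne']
    exact div_pos (sin_pos_of_pos_of_lt_pi hpos hx.2) hpos

theorem mul_cot_eq_cos_div_sinc {x : ℝ} (hx : x ≠ 0) : x * Real.cot x = cos x / sinc x := by
  rw [Real.cot_eq_cos_div_sin, sinc_of_ne_zero hx, div_div_eq_mul_div, mul_div_assoc', mul_comm]

theorem intervalIntegrable_mul_cot {a : ℝ} (ha : a ∈ Ico 0 π) :
    IntervalIntegrable (fun x ↦ x * Real.cot x) volume 0 a := by
  -- `x * cot x` is discontinuous at `0`, where it takes the value `0` instead of the limit `1`.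
  have hcont : ContinuousOn (fun x ↦ cos x / sinc x) (uIcc 0 a) := by
    rw [uIcc_of_le ha.1]
    exact continuous_cos.continuousOn.div continuous_sinc.continuousOn
      fun x hx ↦ (sinc_pos_of_mem_Ico ⟨hx.1, hx.2.trans_lt ha.2⟩).ne'
  refine hcont.intervalIntegrable.congr fun x hx ↦ (mul_cot_eq_cos_div_sinc ?_).symm
  rw [uIoc_of_le ha.1] at hx
  exact hx.1.ne'

theorem continuousOn_mul_log_sin : ContinuousOn (fun x ↦ x * log (sin x)) (Ico 0 π) := by
  have hcont : ContinuousOn (fun x ↦ x * log x + x * log (sinc x)) (Ico 0 π) :=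
    continuous_mul_log.continuousOn.add <| continuousOn_id.mul <|
      continuous_sinc.continuousOn.log fun x hx ↦ (sinc_pos_of_mem_Ico hx).ne'
  refine hcont.congr fun x hx ↦ ?_
  rcases eq_or_ne x 0 with rfl | hx₀
  · simp
  · have hsin : sin x = x * sinc x := by rw [sinc_of_ne_zero hx₀, mul_div_cancel₀ _ hx₀]
    simp only [hsin, log_mul hx₀ (sinc_pos_of_mem_Ico hx).ne', mul_add]

theorem integral_mul_cot {a : ℝ} (ha : a ∈ Ico 0 π) :
    ∫ x in 0..a, x * Real.cot x = a * log (sin a) - ∫ x in 0..a, log (sin x) := by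
  have hlog : IntervalIntegrable (fun x ↦ log (sin x)) volume 0 a := intervalIntegrable_log_sin
  have hderiv : ∀ x ∈ Ioo 0 a,
      HasDerivAt (fun x ↦ x * log (sin x)) (log (sin x) + x * Real.cot x) x := fun x hx ↦ by
    have hsin : sin x ≠ 0 := (sin_pos_of_pos_of_lt_pi hx.1 (hx.2.trans ha.2)).ne'
    simpa [Real.cot_eq_cos_div_sin] using
      (hasDerivAt_id' x).fun_mul ((hasDerivAt_sin x).log hsin)
  have hparts := intervalIntegral.integral_eq_sub_of_hasDerivAt_of_le ha.1
    (continuousOn_mul_log_sin.mono fun x hx ↦ ⟨hx.1, hx.2.trans_lt ha.2⟩) hderiv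
    (hlog.add (intervalIntegrable_mul_cot ha))
  rw [intervalIntegral.integral_add hlog (intervalIntegrable_mul_cot ha)] at hparts
  linarith

theorem integral_mul_cot_zero_pi_div_two :
    ∫ x in 0..(π / 2), x * Real.cot x = π / 2 * log 2 := by
  rw [integral_mul_cot ⟨by positivity, by linarith [pi_pos]⟩, integral_log_sin_zero_pi_div_two,
    sin_pi_div_two, log_one]
  ring

end CotangentIntegrals

section SineSeries

theorem sin_two_mul_nat_mul_mul_cot (n : ℕ) {x : ℝ} (hx : sin x ≠ 0) :
    sin (2 * n * x) * Real.cot x =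
      ∑ k ∈ Finset.range n, (cos (2 * (k + 1) * x) + cos (2 * k * x)) := by
  induction n with
  | zero => simp
  | succ n ih =>
    have hsin : sin (2 * (n + 1 : ℕ) * x) =
        sin (2 * n * x) * cos (2 * x) + cos (2 * n * x) * sin (2 * x) := by
      rw [← sin_add]; push_cast; ring_nf
    have hcos : cos (2 * (n + 1) * x) =
        cos (2 * n * x) * cos (2 * x) - sin (2 * n * x) * sin (2 * x) := by
      rw [← cos_add]; ring_nf
    rw [Finset.sum_range_succ, ← ih, hsin, hcos, sin_two_mul, cos_two_mul, Real.cot_eq_cos_div_sin]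
    field_simp
    linear_combination 2 * sin (2 * n * x) * cos x * sin_sq_add_cos_sq x

theorem abs_sin_two_mul_nat_mul_mul_cot_le (n : ℕ) (x : ℝ) :
    |sin (2 * n * x) * Real.cot x| ≤ 2 * n := by
  rcases eq_or_ne (sin x) 0 with hx | hx
  · simp [Real.cot_eq_cos_div_sin, hx]
  · rw [sin_two_mul_nat_mul_mul_cot n hx]
    calc |∑ k ∈ Finset.range n, (cos (2 * (k + 1) * x) + cos (2 * k * x))|
        ≤ ∑ k ∈ Finset.range n, |cos (2 * (k + 1) * x) + cos (2 * k * x)| :=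
          Finset.abs_sum_le_sum_abs _ _
      _ ≤ ∑ k ∈ Finset.range n, (1 + 1 : ℝ) := Finset.sum_le_sum fun k _ ↦
          (abs_add_le _ _).trans (add_le_add (abs_cos_le_one _) (abs_cos_le_one _))
      _ = 2 * n := by rw [Finset.sum_const, Finset.card_range, nsmul_eq_mul]; ring

theorem integral_cos_two_mul_nat_mul (k : ℕ) :
    ∫ x in 0..(π / 2), cos (2 * k * x) = if k = 0 then π / 2 else 0 := by
  split_ifs with hk
  · simp [hk]
  · rw [intervalIntegral.integral_comp_mul_left cos (by positivity), integral_cos,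
      show 2 * (k : ℝ) * (π / 2) = k * π by ring, sin_nat_mul_pi]
    simp

theorem integral_sin_two_mul_nat_mul_mul_cot {n : ℕ} (hn : n ≠ 0) :
    ∫ x in 0..(π / 2), sin (2 * n * x) * Real.cot x = π / 2 := by
  have hsum : EqOn (fun x ↦ sin (2 * n * x) * Real.cot x)
      (fun x ↦ ∑ k ∈ Finset.range n, (cos (2 * (k + 1 : ℕ) * x) + cos (2 * k * x)))
      (uIoo 0 (π / 2)) := fun x hx ↦ by
    rw [uIoo_of_le (by positivity)] at hx
    have hsin := sin_pos_of_pos_of_lt_pi hx.1 (by linarith [hx.2, pi_pos])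
    simpa using sin_two_mul_nat_mul_mul_cot n hsin.ne'
  have hint (k : ℕ) : IntervalIntegrable (fun x ↦ cos (2 * k * x)) volume 0 (π / 2) :=
    Continuous.intervalIntegrable (by fun_prop) _ _
  rw [intervalIntegral.integral_congr_uIoo hsum,
    intervalIntegral.integral_finsetSum fun k _ ↦ (hint _).add (hint _)]
  simp_rw [fun k : ℕ ↦ intervalIntegral.integral_add (hint (k + 1)) (hint k),
    integral_cos_two_mul_nat_mul]
  simp [Nat.pos_of_ne_zero hn]

theorem hasSum_integral_sine_series_mul_cot {a : ℕ → ℝ} {f : ℝ → ℝ} (ha₀ : a 0 = 0)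
    (ha : Summable fun n : ℕ ↦ n * |a n|)
    (hf : ∀ x ∈ Ioc 0 (π / 2), HasSum (fun n : ℕ ↦ a n * sin (2 * n * x)) (f x)) :
    HasSum (fun n ↦ a n * (π / 2)) (∫ x in 0..(π / 2), f x * Real.cot x) := by
  have hint (n : ℕ) :
      ∫ x in 0..(π / 2), a n * (sin (2 * n * x) * Real.cot x) = a n * (π / 2) := by
    rcases eq_or_ne n 0 with rfl | hn
    · simp [ha₀]
    · rw [intervalIntegral.integral_const_mul, integral_sin_two_mul_nat_mul_mul_cot hn]
  simp_rw [← hint]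
  refine intervalIntegral.hasSum_integral_of_dominated_convergence
    (fun n _ ↦ 2 * (n * |a n|)) (fun n ↦ ?_) (fun n ↦ ?_) ?_ intervalIntegrable_const ?_
  · simp_rw [Real.cot_eq_cos_div_sin]
    exact Measurable.aestronglyMeasurable (by fun_prop)
  · refine .of_forall fun x _ ↦ ?_
    rw [norm_mul, norm_eq_abs, norm_eq_abs]
    calc |a n| * |sin (2 * n * x) * Real.cot x| ≤ |a n| * (2 * n) := by
          gcongr
          exact abs_sin_two_mul_nat_mul_mul_cot_le n x
      _ = 2 * (n * |a n|) := by ring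
  · exact .of_forall fun x _ ↦ ha.mul_left 2
  · refine .of_forall fun x hx ↦ ?_
    rw [uIoc_of_le (by positivity)] at hx
    simpa only [mul_assoc] using (hf x hx).mul_right (Real.cot x)

theorem hasSum_neg_one_pow_div_nat_cube_mul_sin {x : ℝ} (hx : |x| ≤ π / 2) :
    HasSum (fun n : ℕ ↦ (-1) ^ n / (n : ℝ) ^ 3 * sin (2 * n * x))
      (2 / 3 * x ^ 3 - π ^ 2 / 6 * x) := by
  have hmem : 1 / 2 + x / π ∈ Icc 0 1 := by
    have hdiv : |x / π| ≤ 1 / 2 := by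
      rw [abs_div, abs_of_pos pi_pos, div_le_iff₀ pi_pos]
      linarith
    constructor <;> linarith [abs_le.mp hdiv]
  convert! hasSum_one_div_nat_pow_mul_sin one_ne_zero hmem using 1
  · funext n
    rw [show 2 * π * n * (1 / 2 + x / π) = 2 * n * x + n * π by field_simp; ring,
      sin_add_nat_mul_pi]
    ring
  · simp [Polynomial.bernoulli_def, Finset.sum_range_succ, Nat.factorial, Nat.choose,
      bernoulli_eq_bernoulli'_of_ne_one]
    field_simp
    ring

theorem integral_cubic_mul_cot_zero_pi_div_two :
    ((∫ x in 0..(π / 2), (2 / 3 * x ^ 3 - π ^ 2 / 6 * x) * Real.cot x : ℝ) : ℂ) =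
      -(3 * π / 8) * riemannZeta 3 := by
  have hseries : HasSum (fun n : ℕ ↦ (-1) ^ n / (n : ℝ) ^ 3 * (π / 2))
      (∫ x in 0..(π / 2), (2 / 3 * x ^ 3 - π ^ 2 / 6 * x) * Real.cot x) := by
    refine hasSum_integral_sine_series_mul_cot (by simp) ?_ fun x hx ↦
      hasSum_neg_one_pow_div_nat_cube_mul_sin (abs_le.mpr ⟨by linarith [hx.1, hx.2], hx.2⟩)
    refine (Real.summable_one_div_nat_pow.mpr one_lt_two).congr fun n ↦ ?_
    rw [abs_div, abs_neg_one_pow, abs_of_nonneg (by positivity)]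
    field_simp
  have hζ : HasSum (fun n : ℕ ↦ (((-1) ^ n / (n : ℝ) ^ 3 * (π / 2) : ℝ) : ℂ))
      ((2 / 2 ^ 3 - 1) * riemannZeta 3 * (π / 2)) := by
    simpa using
      (hasSum_neg_one_pow_div_nat_cpow (s := (3 : ℕ)) (by norm_num)).mul_right (π / 2 : ℂ)
  rw [(Complex.hasSum_ofReal.mpr hseries).unique hζ]
  ring

theorem integral_cube_mul_cot_zero_pi_div_two :
    ((∫ x in 0..(π / 2), x ^ 3 * Real.cot x : ℝ) : ℂ) =
      π ^ 3 / 8 * log 2 - 9 * π / 16 * riemannZeta 3 := by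
  have hint := intervalIntegrable_mul_cot (a := π / 2) ⟨by positivity, by linarith [pi_pos]⟩
  have hint₃ : IntervalIntegrable (fun x ↦ x ^ 3 * Real.cot x) volume 0 (π / 2) := by
    exact (hint.continuousOn_mul (g := fun x ↦ x ^ 2) (by fun_prop)).congr fun x _ ↦ by ring
  have hsplit : ∫ x in 0..(π / 2), (2 / 3 * x ^ 3 - π ^ 2 / 6 * x) * Real.cot x =
      2 / 3 * (∫ x in 0..(π / 2), x ^ 3 * Real.cot x) - π ^ 3 / 12 * log 2 := by
    simp_rw [sub_mul, mul_assoc]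
    rw [intervalIntegral.integral_sub (hint₃.const_mul _) (hint.const_mul _),
      intervalIntegral.integral_const_mul, intervalIntegral.integral_const_mul,
      integral_mul_cot_zero_pi_div_two]
    ring
  have hcubic := integral_cubic_mul_cot_zero_pi_div_two
  rw [hsplit] at hcubic
  push_cast at hcubic
  linear_combination 3 / 2 * hcubic

end SineSeries

section Moments

theorem hasSum_riemannZeta_two_mul_mul_div_pi_pow {y : ℝ} (hy : y ∈ Ioo 0 π) :
    HasSum (fun n : ℕ ↦ riemannZeta (2 * n) * (y / π) ^ (2 * n)) (-(y / 2 * Real.cot y)) := by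
  have hπ : (π : ℂ) ≠ 0 := by exact_mod_cast pi_ne_zero
  have hz₀ : (y / π : ℂ) ≠ 0 := div_ne_zero (by exact_mod_cast hy.1.ne') hπ
  have hz : ‖(y / π : ℂ)‖ < 1 := by
    rw [← Complex.ofReal_div, Complex.norm_of_nonneg (div_pos hy.1 pi_pos).le,
      div_lt_one pi_pos]
    exact hy.2
  simpa [mul_div_cancel₀ _ hπ] using hasSum_riemannZeta_two_mul_mul_pow hz₀ hz

theorem hasSum_integral_riemannZeta_two_mul_mul_pow (p : ℕ) {x : ℝ} (hx : x ∈ Ioo 0 π) :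
    HasSum (fun n : ℕ ↦ ∫ y in 0..x, (y : ℂ) ^ p * (riemannZeta (2 * n) * (y / π) ^ (2 * n)))
      (∫ y in 0..x, (y : ℂ) ^ p * (-(y / 2 * Real.cot y))) := by
  refine intervalIntegral.hasSum_integral_of_dominated_convergence
    (fun n _ ↦ x ^ p * ‖riemannZeta (2 * n) * (x / π) ^ (2 * n)‖)
    (fun n ↦ ?_) (fun n ↦ .of_forall fun y hy ↦ ?_) ?_ intervalIntegrable_const
    (.of_forall fun y hy ↦ ?_)
  · exact Continuous.aestronglyMeasurable (by fun_prop)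
  · rw [uIoc_of_le hx.1.le] at hy
    have hx₀ := hx.1.le
    have hy₀ := hy.1.le
    simp only [norm_mul, norm_pow, norm_div, Complex.norm_real, norm_eq_abs, abs_of_pos hy.1,
      abs_of_pos hx.1]
    gcongr <;> exact hy.2
  · exact .of_forall fun _ _ ↦
      (hasSum_riemannZeta_two_mul_mul_div_pi_pow hx).summable.norm.mul_left _
  · rw [uIoc_of_le hx.1.le] at hy
    exact (hasSum_riemannZeta_two_mul_mul_div_pi_pow ⟨hy.1, hy.2.trans_lt hx.2⟩).mul_left _

theorem hasSum_riemannZeta_two_mul_div (p : ℕ) {x : ℝ} (hx : x ∈ Ioo 0 π) :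
    HasSum (fun n : ℕ ↦ riemannZeta (2 * n) * (x / π) ^ (2 * n) / (2 * n + p + 1))
      (-((∫ y in 0..x, y ^ (p + 1) * Real.cot y : ℝ) / (2 * x ^ (p + 1)))) := by
  have hx₀ : (x : ℂ) ≠ 0 := by exact_mod_cast hx.1.ne'
  convert! (hasSum_integral_riemannZeta_two_mul_mul_pow p hx).div_const ((x : ℂ) ^ (p + 1)) using 1
  · funext n
    have hmonomial (y : ℝ) : (y : ℂ) ^ p * (riemannZeta (2 * n) * (y / π) ^ (2 * n)) =
        riemannZeta (2 * n) / π ^ (2 * n) * (y ^ (2 * n + p) : ℝ) := by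
      push_cast
      ring
    have hn : (2 * n + p + 1 : ℂ) ≠ 0 := by exact_mod_cast (2 * n + p).succ_ne_zero
    simp_rw [hmonomial]
    rw [intervalIntegral.integral_const_mul, intervalIntegral.integral_ofReal, integral_pow,
      div_pow]
    push_cast
    field_simp
    ring
  · have hcot (y : ℝ) : (y : ℂ) ^ p * (-(y / 2 * Real.cot y)) =
        -1 / 2 * (y ^ (p + 1) * Real.cot y : ℝ) := by
      push_cast
      ring
    simp_rw [hcot]
    rw [intervalIntegral.integral_const_mul, intervalIntegral.integral_ofReal]
    field_simp

end Moments

theorem stmt3 :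
    ∑' n : ℕ, riemannZeta (2 * n) / ((2 * n + 3) * 4 ^ n) =
      -(1 / 2) * (Real.log 2 : ℂ) + 9 * riemannZeta 3 / (4 * (π : ℂ) ^ 2) := by
  have hπ : (π : ℂ) ≠ 0 := by exact_mod_cast pi_ne_zero
  have hterm (n : ℕ) : riemannZeta (2 * n) / ((2 * n + 3) * 4 ^ n) =
      riemannZeta (2 * n) * ((π / 2 : ℝ) / π) ^ (2 * n) / (2 * n + (2 : ℕ) + 1) := by
    have hhalf : ((π / 2 : ℝ) / π : ℂ) ^ (2 * n) = 1 / 4 ^ n := by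
      rw [pow_mul, ← one_div_pow]
      push_cast
      field_simp
      norm_num
    rw [hhalf, mul_one_div, div_div]
    push_cast
    ring
  rw [tsum_congr hterm,
    (hasSum_riemannZeta_two_mul_div 2 ⟨by positivity, by linarith [pi_pos]⟩).tsum_eq,
    integral_cube_mul_cot_zero_pi_div_two]
  push_cast
  field_simp
  ring
end

section
/- The series ∑_{n=0}^∞ ζ(2n)/((2n+3)·16^n) equals -(1/4)·log 2 + 9ζ(3)/(8π²) - 3G/π + 24β(4)/π³, where β is the Dirichlet beta function. -/
open Real

noncomputable def dirichletBeta (s : ℕ) : ℝ := ∑' n : ℕ, (-1) ^ n / (2 * (n : ℝ) + 1) ^ s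

noncomputable def catalanConst : ℝ := ∑' n : ℕ, (-1) ^ n / (2 * (n : ℝ) + 1) ^ 2

/-!
By the cotangent series, `∑ ζ(2n) z ^ (2n) = -(π z / 2) cot (π z)`, which on the upper half-plane is
`π i z (1/2 + Li_0(e^{2πiz}))`. Multiplied by `z ^ p`, the left side integrates termwise, and the
right side by parts, each integration raising the order of the polylogarithm. The two primitives
differ by a constant on the upper half of the unit disc. For even `p` the reflection `z ↦ -conj z`
shows that this constant is purely imaginary, so the real parts agree, and by continuity they
still agree at the real points `0 < a < 1`. The sum is the case `p = 2`, `a = 1/4`, where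
`e^{2πia} = i` and `Li_s(i)` has real part a multiple of `ζ(s)` and imaginary part `β(s)`.
-/

open Filter Topology ComplexConjugate
open Complex (I integerComplement)

lemma hasDerivAt_tsum_mul_pow_div {𝕜 : Type*} [RCLike 𝕜] {a : ℕ → 𝕜} {C : ℝ}
    (ha : ∀ n, ‖a n‖ ≤ C) {φ : ℕ → ℕ} (hφ : StrictMono φ) {z : 𝕜} (hz : ‖z‖ < 1) :
    HasDerivAt (fun w ↦ ∑' n, a n * w ^ (φ n + 1) / (φ n + 1)) (∑' n, a n * z ^ φ n) z := by
  obtain ⟨r, hzr, hr⟩ := exists_between hz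
  have hr0 : 0 < r := (norm_nonneg z).trans_lt hzr
  have hu : Summable fun n ↦ C * r ^ φ n :=
    ((summable_geometric_of_lt_one hr0.le hr).comp_injective hφ.injective).mul_left C
  refine hasDerivAt_tsum_of_isPreconnected (y₀ := 0)
    (g := fun n w ↦ a n * w ^ (φ n + 1) / (φ n + 1))
    (g' := fun n w ↦ a n * w ^ φ n) hu Metric.isOpen_ball
    (convex_ball (0 : 𝕜) r).isPreconnected (fun n w _ ↦ ?_) (fun n w hw ↦ ?_)
    (Metric.mem_ball_self hr0) ?_ (by simpa using hzr)
  · have hn : (φ n + 1 : 𝕜) ≠ 0 := by exact_mod_cast (φ n).succ_ne_zero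
    refine (((hasDerivAt_pow (φ n + 1) w).const_mul (a n)).div_const _).congr_deriv ?_
    push_cast
    field_simp
  · have hw' : ‖w‖ ≤ r := by simpa using (Metric.mem_ball.mp hw).le
    rw [norm_mul, norm_pow]
    gcongr
    · exact (norm_nonneg _).trans (ha n)
    · exact ha n
  · simp

lemma norm_natCast_add_one (k : ℕ) : ‖(k : ℂ) + 1‖ = k + 1 :=
  mod_cast Complex.norm_natCast (k + 1)

section Polylog

/-- The polylogarithm `Li_s(q) = ∑_{k ≥ 1} q ^ k / k ^ s` of natural order, with the summation index
shifted by one. It converges absolutely for `‖q‖ < 1`, and for `‖q‖ ≤ 1` if `2 ≤ s`. -/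
noncomputable def polylog (s : ℕ) (q : ℂ) : ℂ := ∑' k : ℕ, q ^ (k + 1) / (k + 1) ^ s

variable {s : ℕ} {q : ℂ}

lemma norm_polylog_term_le (hq : ‖q‖ ≤ 1) (k : ℕ) :
    ‖q ^ (k + 1) / ((k : ℂ) + 1) ^ s‖ ≤ 1 / ((k : ℝ) + 1) ^ s := by
  rw [norm_div, norm_pow, norm_pow, norm_natCast_add_one]
  gcongr
  exact pow_le_one₀ (norm_nonneg q) hq

lemma summable_one_div_nat_add_one_pow (hs : 1 < s) :
    Summable fun k : ℕ ↦ 1 / ((k : ℝ) + 1) ^ s := by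
  simpa using (summable_nat_add_iff 1).mpr (Real.summable_one_div_nat_pow.mpr hs)

lemma summable_polylog (hs : 1 < s) (hq : ‖q‖ ≤ 1) :
    Summable fun k : ℕ ↦ q ^ (k + 1) / ((k : ℂ) + 1) ^ s :=
  .of_norm_bounded (summable_one_div_nat_add_one_pow hs) (norm_polylog_term_le hq)

lemma continuousOn_polylog (hs : 1 < s) : ContinuousOn (polylog s) (Metric.closedBall 0 1) :=
  continuousOn_tsum (fun _ ↦ by fun_prop) (summable_one_div_nat_add_one_pow hs)
    fun k _ hq ↦ norm_polylog_term_le (by simpa using hq) k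

lemma conj_polylog (s : ℕ) (q : ℂ) : conj (polylog s q) = polylog s (conj q) := by
  simp [polylog, Complex.conj_tsum]

lemma hasDerivAt_polylog (hq : ‖q‖ < 1) :
    HasDerivAt (polylog (s + 1)) (∑' k : ℕ, q ^ k / (k + 1) ^ s) q := by
  have hbound (k : ℕ) : ‖1 / ((k : ℂ) + 1) ^ s‖ ≤ 1 := by
    simpa using (norm_polylog_term_le (s := s) (q := 1) (by simp) k).trans
      (div_le_one_of_le₀ (one_le_pow₀ (by simp)) (by positivity))
  refine ((hasDerivAt_tsum_mul_pow_div hbound strictMono_id hq).congr_deriv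
    (tsum_congr fun k ↦ ?_)).congr_of_eventuallyEq (.of_forall fun w ↦ tsum_congr fun k ↦ ?_)
  · simp only [id]
    ring
  · simp only [id]
    field_simp
    ring

lemma polylog_zero_left (hq : ‖q‖ < 1) : polylog 0 q = q / (1 - q) := by
  simp_rw [polylog, pow_zero, div_one, pow_succ', tsum_mul_left,
    tsum_geometric_of_norm_lt_one hq, div_eq_mul_inv]

lemma polylog_one_left (hq : ‖q‖ < 1) : polylog 1 q = -Complex.log (1 - q) := by
  simpa [polylog] using (Complex.hasSum_taylorSeries_neg_log' hq).tsum_eq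

lemma polylog_one_right (hs : 1 < s) : polylog s 1 = riemannZeta s := by
  rw [zeta_eq_tsum_one_div_nat_add_one_cpow (by simpa using hs)]
  simp [polylog]

lemma polylog_add_polylog_neg (hs : 1 < s) (hq : ‖q‖ ≤ 1) :
    polylog s q + polylog s (-q) = 2 / 2 ^ s * polylog s (q ^ 2) := by
  have hodd : Function.Injective fun m : ℕ ↦ 2 * m + 1 := fun _ _ h ↦ by simpa using h
  rw [polylog, polylog, ← (summable_polylog hs hq).tsum_add
    (summable_polylog hs (by simpa using hq)), polylog, ← tsum_mul_left, ← hodd.tsum_eq]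
  · refine tsum_congr fun m ↦ ?_
    have hm : ((2 * m + 1 : ℕ) : ℂ) + 1 = 2 * (m + 1) := by push_cast; ring
    rw [hm, show 2 * m + 1 + 1 = 2 * (m + 1) by ring, (even_two_mul (m + 1)).neg_pow, pow_mul,
      mul_pow]
    ring
  · refine Function.support_subset_iff'.mpr fun k hk ↦ ?_
    obtain ⟨m, rfl | rfl⟩ := k.even_or_odd'
    · rw [(even_two_mul m).add_one.neg_pow]
      ring
    · exact absurd ⟨m, rfl⟩ hk

lemma re_polylog_I (hs : 1 < s) :
    ((polylog s I).re : ℂ) = (2 / 2 ^ s - 1) / 2 ^ s * riemannZeta s := by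
  have hI := polylog_add_polylog_neg hs (q := I) (by simp)
  have h1 := polylog_add_polylog_neg hs (q := 1) (by simp)
  rw [← Complex.conj_I, ← conj_polylog, Complex.add_conj, Complex.I_sq] at hI
  rw [one_pow, polylog_one_right hs] at h1
  push_cast at hI
  linear_combination hI / 2 + h1 / 2 ^ s

lemma im_polylog_I (hs : 1 < s) : (polylog s I).im = dirichletBeta s := by
  have hterm (k : ℕ) :
      (I ^ (k + 1) / ((k : ℂ) + 1) ^ s).im = (I ^ (k + 1)).im / ((k : ℝ) + 1) ^ s := by
    exact_mod_cast Complex.div_ofReal_im (I ^ (k + 1)) (((k : ℝ) + 1) ^ s)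
  have heven : Function.Injective fun m : ℕ ↦ 2 * m := fun _ _ h ↦ by simpa using h
  rw [polylog, Complex.im_tsum (summable_polylog hs (by simp)), tsum_congr hterm, dirichletBeta,
    ← heven.tsum_eq]
  · refine tsum_congr fun m ↦ ?_
    have hIm : (I ^ (2 * m + 1)).im = (-1) ^ m := by
      rw [pow_succ, pow_mul, Complex.I_sq, Complex.mul_I_im]
      exact_mod_cast Complex.ofReal_re ((-1) ^ m)
    rw [hIm]
    push_cast
    rfl
  · refine Function.support_subset_iff'.mpr fun k hk ↦ ?_
    obtain ⟨m, rfl | rfl⟩ := k.even_or_odd'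
    · exact absurd ⟨m, rfl⟩ hk
    · have hIm : (I ^ (2 * m + 1 + 1)).im = 0 := by
        rw [add_assoc, ← mul_add_one, pow_mul, Complex.I_sq]
        exact_mod_cast Complex.ofReal_im ((-1) ^ (m + 1))
      rw [hIm, zero_div]

end Polylog

section GeneratingFunction

variable {z : ℂ}

lemma norm_riemannZeta_two_mul_natCast_le (n : ℕ) : ‖riemannZeta (2 * n)‖ ≤ π ^ 2 / 6 := by
  rcases n.eq_zero_or_pos with rfl | hn
  · norm_num [riemannZeta_zero]
    nlinarith [Real.pi_gt_three]
  · have hζ := polylog_one_right (s := 2 * n) (by omega)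
    push_cast at hζ
    have htwo : HasSum (fun k : ℕ ↦ 1 / ((k : ℝ) + 1) ^ 2) (π ^ 2 / 6) := by
      simpa using (hasSum_nat_add_iff' 1).mpr hasSum_zeta_two
    rw [← hζ]
    refine tsum_of_norm_bounded htwo fun k ↦ (norm_polylog_term_le (by simp) k).trans ?_
    gcongr
    · simp
    · omega

lemma tsum_pow_succ_sq_div_nat_add_one (hz : z ∈ integerComplement) (hz1 : ‖z‖ < 1)
    (k : ℕ) : ∑' n : ℕ, ((z / (k + 1)) ^ 2) ^ (n + 1) =
      -(z / 2) * (1 / (z - (k + 1)) + 1 / (z + (k + 1))) := by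
  have hk : (k : ℂ) + 1 ≠ 0 := mod_cast k.succ_ne_zero
  have hsub : z - (k + 1) ≠ 0 := by
    simpa [sub_eq_add_neg] using Complex.integerComplement_add_ne_zero hz (-(k + 1))
  have hadd : z + (k + 1) ≠ 0 := by
    simpa using Complex.integerComplement_add_ne_zero hz (k + 1)
  have hlt : ‖(z / (k + 1)) ^ 2‖ < 1 := by
    rw [norm_pow, norm_div, norm_natCast_add_one]
    refine pow_lt_one₀ (by positivity) ?_ two_ne_zero
    exact (div_le_self (norm_nonneg z) (by simp)).trans_lt hz1
  have hden : 1 - (z / ((k : ℂ) + 1)) ^ 2 = -((z - (k + 1)) * (z + (k + 1))) / (k + 1) ^ 2 := by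
    field_simp
    ring
  rw [tsum_congr fun n ↦ pow_succ' _ n, tsum_mul_left, tsum_geometric_of_norm_lt_one hlt, hden]
  field_simp
  ring

lemma summable_pow_succ_sq_div_nat_add_one (hz : ‖z‖ < 1) :
    Summable (Function.uncurry fun n k : ℕ ↦ ((z / ((k : ℂ) + 1)) ^ 2) ^ (n + 1)) := by
  have hgeom : Summable fun n : ℕ ↦ (‖z‖ ^ 2) ^ (n + 1) :=
    (summable_nat_add_iff 1).mpr <| summable_geometric_of_lt_one (by positivity)
      (pow_lt_one₀ (norm_nonneg z) hz two_ne_zero)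
  refine .of_norm_bounded (hgeom.mul_of_nonneg (summable_one_div_nat_add_one_pow one_lt_two)
    (fun n ↦ by positivity) fun k ↦ by positivity) fun ⟨n, k⟩ ↦ ?_
  simp only [Function.uncurry, norm_pow, norm_div, norm_natCast_add_one, div_pow, ← pow_mul]
  rw [div_eq_mul_one_div]
  gcongr
  · simp
  · omega

lemma summable_riemannZeta_two_mul_mul_pow (hz : ‖z‖ < 1) :
    Summable fun n : ℕ ↦ riemannZeta (2 * n) * z ^ (2 * n) := by
  refine .of_norm_bounded (((summable_geometric_of_lt_one (norm_nonneg z) hz).comp_injective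
    (mul_right_injective₀ two_ne_zero)).mul_left (π ^ 2 / 6)) fun n ↦ ?_
  rw [norm_mul, norm_pow]
  exact mul_le_mul_of_nonneg_right (norm_riemannZeta_two_mul_natCast_le n) (by positivity)

lemma tsum_riemannZeta_two_mul_mul_pow (hz : z ∈ integerComplement) (hz1 : ‖z‖ < 1) :
    ∑' n : ℕ, riemannZeta (2 * n) * z ^ (2 * n) = -(z / 2) * (π * Complex.cot (π * z)) := by
  have hz0 : z ≠ 0 := Complex.integerComplement.ne_zero hz
  have hterm (n : ℕ) : riemannZeta (2 * (n + 1 : ℕ)) * z ^ (2 * (n + 1)) =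
      ∑' k : ℕ, ((z / (k + 1)) ^ 2) ^ (n + 1) := by
    have hζ := polylog_one_right (s := 2 * (n + 1)) (by omega)
    push_cast at hζ ⊢
    rw [← hζ, polylog, ← tsum_mul_right]
    refine tsum_congr fun k ↦ ?_
    rw [← pow_mul, div_pow]
    ring
  rw [(summable_riemannZeta_two_mul_mul_pow hz1).tsum_eq_zero_add, tsum_congr hterm,
    ← (summable_pow_succ_sq_div_nat_add_one hz1).tsum_comm,
    tsum_congr (tsum_pow_succ_sq_div_nat_add_one hz hz1), tsum_mul_left, ← cot_series_rep' hz]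
  simp only [Nat.cast_zero, mul_zero, riemannZeta_zero, pow_zero]
  field_simp
  ring

end GeneratingFunction

section UpperHalfPlane

/-- The function `z ↦ Li_s(e^{2πiz})`, which turns the recursion `q Li_{s+1}'(q) = Li_s(q)` into
differentiation on the upper half-plane. -/
noncomputable def polylogExp (s : ℕ) (z : ℂ) : ℂ := polylog s (Complex.exp (2 * π * I * z))

/-- The primitive of `z ↦ 2πi z ^ p Li_s(e^{2πiz})` on the upper half-plane that repeated
integration by parts produces. -/
noncomputable def polylogMoment : ℕ → ℕ → ℂ → ℂ
  | 0, s, z => polylogExp (s + 1) z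
  | p + 1, s, z =>
    z ^ (p + 1) * polylogExp (s + 1) z - (p + 1) / (2 * π * I) * polylogMoment p (s + 1) z

/-- The series `∑ ζ(2n) z ^ (2n + p) / (2n + p)`, the primitive of
`z ^ (p - 1) * ∑ ζ(2n) z ^ (2n)` vanishing at `0` when `1 ≤ p`. -/
noncomputable def evenZetaSeries (p : ℕ) (z : ℂ) : ℂ :=
  ∑' n : ℕ, riemannZeta (2 * n) * z ^ (2 * n + p) / (2 * n + p)

/-- A primitive of `z ^ (p - 1) * ∑ ζ(2n) z ^ (2n)` on the upper half of the unit disc for `1 ≤ p`,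
expressed through polylogarithms. -/
noncomputable def evenZetaPrimitive (p : ℕ) (z : ℂ) : ℂ :=
  π * I * z ^ (p + 1) / (2 * (p + 1)) + polylogMoment p 0 z / 2

variable {s : ℕ} {z : ℂ}

lemma norm_exp_two_pi_I_mul (z : ℂ) :
    ‖Complex.exp (2 * π * I * z)‖ = Real.exp (-(2 * π * z.im)) := by
  simp [Complex.norm_exp]

lemma continuousOn_polylogExp (hs : 1 < s) : ContinuousOn (polylogExp s) {z | 0 ≤ z.im} := by
  refine (continuousOn_polylog hs).comp (by fun_prop) fun z hz ↦ ?_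
  have him : 0 ≤ z.im := hz
  rw [mem_closedBall_zero_iff, norm_exp_two_pi_I_mul, Real.exp_le_one_iff, neg_nonpos]
  positivity

lemma continuousOn_polylogMoment (p : ℕ) (hs : 0 < s) :
    ContinuousOn (polylogMoment p s) {z | 0 ≤ z.im} := by
  induction p generalizing s with
  | zero => exact continuousOn_polylogExp (by omega)
  | succ p ih =>
    exact ((continuousOn_id.pow (p + 1)).mul (continuousOn_polylogExp (by omega))).sub
      (continuousOn_const.mul (ih s.succ_pos))

lemma hasDerivAt_polylogExp (hz : 0 < z.im) :
    HasDerivAt (polylogExp (s + 1)) (2 * π * I * polylogExp s z) z := by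
  have hq : ‖Complex.exp (2 * π * I * z)‖ < 1 := UpperHalfPlane.norm_exp_two_pi_I_lt_one ⟨z, hz⟩
  have hexp := ((hasDerivAt_id z).const_mul (2 * π * I)).cexp
  refine ((hasDerivAt_polylog hq).comp z hexp).congr_deriv ?_
  simp_rw [polylogExp, polylog, id, mul_one, pow_succ', mul_div_assoc, tsum_mul_left]
  ring

lemma hasDerivAt_polylogMoment (p s : ℕ) (hz : 0 < z.im) :
    HasDerivAt (polylogMoment p s) (2 * π * I * z ^ p * polylogExp s z) z := by
  induction p generalizing s with
  | zero => simpa using! hasDerivAt_polylogExp hz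
  | succ p ih =>
    refine (((hasDerivAt_pow (p + 1) z).mul (hasDerivAt_polylogExp hz)).sub
      ((ih (s + 1)).const_mul ((p + 1) / (2 * π * I)))).congr_deriv ?_
    push_cast
    field_simp [Complex.two_pi_I_ne_zero]
    ring

lemma hasDerivAt_evenZetaSeries (p : ℕ) (hz : ‖z‖ < 1) :
    HasDerivAt (evenZetaSeries (p + 1))
      (z ^ p * ∑' n : ℕ, riemannZeta (2 * n) * z ^ (2 * n)) z := by
  have hexp : StrictMono fun n : ℕ ↦ 2 * n + p := fun _ _ h ↦ by dsimp; omega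
  refine ((hasDerivAt_tsum_mul_pow_div norm_riemannZeta_two_mul_natCast_le hexp hz).congr_deriv
    ?_).congr_of_eventuallyEq (.of_forall fun w ↦ tsum_congr fun n ↦ ?_)
  · rw [← tsum_mul_left]
    exact tsum_congr fun n ↦ by ring
  · push_cast
    ring

lemma tsum_riemannZeta_two_mul_mul_pow_eq_polylogExp (hz : 0 < z.im) (hz1 : ‖z‖ < 1) :
    ∑' n : ℕ, riemannZeta (2 * n) * z ^ (2 * n) = π * I * z * (1 / 2 + polylogExp 0 z) := by
  have hq : ‖Complex.exp (2 * π * I * z)‖ < 1 := UpperHalfPlane.norm_exp_two_pi_I_lt_one ⟨z, hz⟩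
  have hq1 : 1 - Complex.exp (2 * π * I * z) ≠ 0 := sub_ne_zero.mpr fun h ↦ by simp [← h] at hq
  rw [tsum_riemannZeta_two_mul_mul_pow (UpperHalfPlane.coe_mem_integerComplement ⟨z, hz⟩) hz1,
    pi_mul_cot_pi_q_exp ⟨z, hz⟩, tsum_geometric_of_norm_lt_one hq, polylogExp,
    polylog_zero_left hq]
  generalize Complex.exp (2 * π * I * z) = q at hq1 ⊢
  field_simp
  ring

lemma hasDerivAt_evenZetaPrimitive (p : ℕ) (hz : 0 < z.im) (hz1 : ‖z‖ < 1) :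
    HasDerivAt (evenZetaPrimitive (p + 1))
      (z ^ p * ∑' n : ℕ, riemannZeta (2 * n) * z ^ (2 * n)) z := by
  have hp : (p + 1 + 1 : ℂ) ≠ 0 := mod_cast (p + 1).succ_ne_zero
  rw [tsum_riemannZeta_two_mul_mul_pow_eq_polylogExp hz hz1]
  refine ((((hasDerivAt_pow (p + 2) z).const_mul (π * I)).div_const _).add
    ((hasDerivAt_polylogMoment (p + 1) 0 hz).div_const 2)).congr_deriv ?_
  push_cast
  field_simp
  ring

lemma evenZetaSeries_sub_evenZetaPrimitive_eq (p : ℕ) {w : ℂ} (hz : 0 < z.im) (hz1 : ‖z‖ < 1)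
    (hw : 0 < w.im) (hw1 : ‖w‖ < 1) :
    evenZetaSeries (p + 1) z - evenZetaPrimitive (p + 1) z =
      evenZetaSeries (p + 1) w - evenZetaPrimitive (p + 1) w := by
  have hopen : IsOpen ({z : ℂ | 0 < z.im} ∩ Metric.ball 0 1) :=
    (isOpen_lt continuous_const Complex.continuous_im).inter Metric.isOpen_ball
  have hconn : IsPreconnected ({z : ℂ | 0 < z.im} ∩ Metric.ball 0 1) :=
    ((convex_halfSpace_im_gt 0).inter (convex_ball _ _)).isPreconnected
  have hderiv : ∀ x ∈ {z : ℂ | 0 < z.im} ∩ Metric.ball 0 1,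
      HasDerivAt (fun x ↦ evenZetaSeries (p + 1) x - evenZetaPrimitive (p + 1) x) 0 x := by
    rintro x ⟨hx, hx1⟩
    rw [mem_ball_zero_iff] at hx1
    simpa using! (hasDerivAt_evenZetaSeries p hx1).sub (hasDerivAt_evenZetaPrimitive p hx hx1)
  exact hopen.is_const_of_deriv_eq_zero hconn
    (fun x hx ↦ (hderiv x hx).differentiableAt.differentiableWithinAt)
    (fun x hx ↦ (hderiv x hx).deriv) ⟨hz, by simpa⟩ ⟨hw, by simpa⟩

lemma conj_evenZetaSeries (p : ℕ) (z : ℂ) :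
    conj (evenZetaSeries p z) = evenZetaSeries p (conj z) := by
  have hζ (n : ℕ) : conj (riemannZeta (2 * n)) = riemannZeta (2 * n) := by
    simp [← riemannZeta_conj, Complex.conj_ofNat]
  simp [evenZetaSeries, Complex.conj_tsum, hζ, Complex.conj_ofNat]

lemma evenZetaSeries_neg (p : ℕ) (z : ℂ) :
    evenZetaSeries p (-z) = (-1) ^ p * evenZetaSeries p z := by
  rw [evenZetaSeries, evenZetaSeries, ← tsum_mul_left]
  refine tsum_congr fun n ↦ ?_
  rw [neg_pow, pow_add (-1), (even_two_mul n).neg_one_pow]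
  ring

lemma conj_polylogExp (s : ℕ) (z : ℂ) : conj (polylogExp s z) = polylogExp s (-conj z) := by
  simp [polylogExp, conj_polylog, ← Complex.exp_conj, Complex.conj_ofNat]

lemma conj_polylogMoment (p s : ℕ) (z : ℂ) :
    conj (polylogMoment p s z) = (-1) ^ p * polylogMoment p s (-conj z) := by
  induction p generalizing s with
  | zero => simpa [polylogMoment] using conj_polylogExp (s + 1) z
  | succ p ih =>
    have hz : conj z ^ (p + 1) = (-1) ^ (p + 1) * (-conj z) ^ (p + 1) := by
      rw [← neg_pow, neg_neg]
    simp only [polylogMoment, map_sub, map_mul, map_div₀, map_pow, conj_polylogExp, ih, map_add,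
      map_natCast, map_one, Complex.conj_ofReal, Complex.conj_I, map_ofNat, hz]
    ring

lemma conj_evenZetaPrimitive (p : ℕ) (z : ℂ) :
    conj (evenZetaPrimitive p z) = (-1) ^ p * evenZetaPrimitive p (-conj z) := by
  have hz : conj z ^ (p + 1) = (-1) ^ (p + 1) * (-conj z) ^ (p + 1) := by
    rw [← neg_pow, neg_neg]
  simp only [evenZetaPrimitive, map_add, map_mul, map_div₀, map_pow, conj_polylogMoment,
    map_natCast, map_one, Complex.conj_ofReal, Complex.conj_I, map_ofNat, hz]
  ring

lemma re_evenZetaSeries_eq_re_evenZetaPrimitive {p : ℕ} (hp : Even p) (hz : 0 < z.im)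
    (hz1 : ‖z‖ < 1) : (evenZetaSeries (p + 1) z).re = (evenZetaPrimitive (p + 1) z).re := by
  set D : ℂ → ℂ := fun w ↦ evenZetaSeries (p + 1) w - evenZetaPrimitive (p + 1) w with hD
  have hconst : D (-conj z) = D z :=
    evenZetaSeries_sub_evenZetaPrimitive_eq p (by simpa) (by simpa) hz hz1
  have hconj : conj (D z) = -D (-conj z) := by
    simp only [hD, map_sub, conj_evenZetaSeries, conj_evenZetaPrimitive, evenZetaSeries_neg,
      hp.add_one.neg_one_pow]
    ring
  have hre : (D z).re = -(D z).re := by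
    simpa [hconst] using congrArg Complex.re hconj
  have hzero : (D z).re = 0 := by linarith
  simpa [hD, sub_eq_zero] using hzero

section RealAxis

variable {a : ℝ}

lemma sin_pi_mul_pos (ha0 : 0 < a) (ha1 : a < 1) : 0 < Real.sin (π * a) :=
  Real.sin_pos_of_pos_of_lt_pi (by positivity) (by nlinarith [Real.pi_pos])

lemma norm_one_sub_exp_two_pi_I_mul_ofReal (ha0 : 0 < a) (ha1 : a < 1) :
    ‖1 - Complex.exp (2 * π * I * a)‖ = 2 * Real.sin (π * a) := by
  have hsin := sin_pi_mul_pos ha0 ha1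
  have harg : (2 * π * I * a : ℂ) = I * (2 * π * a : ℝ) := by push_cast; ring
  rw [norm_sub_rev, harg, Complex.norm_exp_I_mul_ofReal_sub_one,
    show 2 * π * a / 2 = π * a by ring, Real.norm_of_nonneg (by positivity)]

lemma one_sub_exp_two_pi_I_mul_ofReal_mem_slitPlane (ha0 : 0 < a) (ha1 : a < 1) :
    1 - Complex.exp (2 * π * I * a) ∈ Complex.slitPlane := by
  have hsin := sin_pi_mul_pos ha0 ha1
  have hre : (1 - Complex.exp (2 * π * I * a)).re = 2 * Real.sin (π * a) ^ 2 := by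
    have harg : (2 * π * I * a : ℂ) = (2 * (π * a) : ℝ) * I := by
      push_cast
      ring
    rw [Real.sin_sq_eq_half_sub, harg, Complex.sub_re, Complex.one_re, Complex.exp_ofReal_mul_I_re]
    ring
  refine .inl ?_
  rw [hre]
  positivity

lemma tendsto_evenZetaPrimitive (p : ℕ) (ha0 : 0 < a) (ha1 : a < 1) :
    Tendsto (evenZetaPrimitive (p + 1)) (𝓝[{z | 0 < z.im}] (a : ℂ))
      (𝓝 (π * I * a ^ (p + 2) / (2 * (p + 2)) -
        (a ^ (p + 1) * Complex.log (1 - Complex.exp (2 * π * I * a)) +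
          (p + 1) / (2 * π * I) * polylogMoment p 1 a) / 2)) := by
  have hlog : ContinuousWithinAt (fun z : ℂ ↦ Complex.log (1 - Complex.exp (2 * π * I * z)))
      {z | 0 < z.im} a :=
    ContinuousWithinAt.clog (by fun_prop) (one_sub_exp_two_pi_I_mul_ofReal_mem_slitPlane ha0 ha1)
  have hmoment : ContinuousWithinAt (polylogMoment p 1) {z | 0 < z.im} a :=
    (continuousOn_polylogMoment p one_pos a (by simp)).mono fun z (hz : 0 < z.im) ↦ hz.le
  have hlim : ContinuousWithinAt (fun z : ℂ ↦ π * I * z ^ (p + 2) / (2 * (p + 2)) -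
      (z ^ (p + 1) * Complex.log (1 - Complex.exp (2 * π * I * z)) +
        (p + 1) / (2 * π * I) * polylogMoment p 1 z) / 2) {z | 0 < z.im} a := by
    fun_prop
  refine hlim.tendsto.congr' ?_
  filter_upwards [self_mem_nhdsWithin] with z hz
  rw [evenZetaPrimitive, polylogMoment, polylogExp,
    polylog_one_left (UpperHalfPlane.norm_exp_two_pi_I_lt_one ⟨z, hz⟩)]
  push_cast
  ring

lemma re_evenZetaSeries_ofReal {p : ℕ} (hp : Even p) (ha0 : 0 < a) (ha1 : a < 1) :
    (evenZetaSeries (p + 1) a).re = -(a ^ (p + 1) * Real.log (2 * Real.sin (π * a)) +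
      ((p + 1) / (2 * π * I) * polylogMoment p 1 a).re) / 2 := by
  have hmem : (a : ℂ) ∈ closure {z : ℂ | 0 < z.im} := by simp
  have : (𝓝[{z : ℂ | 0 < z.im}] (a : ℂ)).NeBot := mem_closure_iff_nhdsWithin_neBot.mp hmem
  have hnorm : ‖(a : ℂ)‖ < 1 := by simpa [abs_of_pos ha0]
  have hseries : Tendsto (evenZetaSeries (p + 1)) (𝓝[{z : ℂ | 0 < z.im}] (a : ℂ))
      (𝓝 (evenZetaSeries (p + 1) a)) :=
    (hasDerivAt_evenZetaSeries p hnorm).continuousAt.tendsto.mono_left nhdsWithin_le_nhds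
  have heq : (fun z ↦ (evenZetaPrimitive (p + 1) z).re) =ᶠ[𝓝[{z : ℂ | 0 < z.im}] (a : ℂ)]
      fun z ↦ (evenZetaSeries (p + 1) z).re := by
    filter_upwards [self_mem_nhdsWithin, nhdsWithin_le_nhds
      ((continuous_norm.tendsto (a : ℂ)).eventually_lt_const hnorm)] with z hz hz1
    exact (re_evenZetaSeries_eq_re_evenZetaPrimitive hp hz hz1).symm
  have hre := tendsto_nhds_unique ((Complex.continuous_re.tendsto _).comp hseries)
    (((Complex.continuous_re.tendsto _).comp (tendsto_evenZetaPrimitive p ha0 ha1)).congr' heq)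
  have hmain : (π * I * a ^ (p + 2) / (2 * (p + 2)) : ℂ) =
      (π * a ^ (p + 2) / (2 * (p + 2)) : ℝ) * I := by
    push_cast
    ring
  have hlog : (a ^ (p + 1) * Complex.log (1 - Complex.exp (2 * π * I * a))).re =
      a ^ (p + 1) * Real.log (2 * Real.sin (π * a)) := by
    rw [← norm_one_sub_exp_two_pi_I_mul_ofReal ha0 ha1, ← Complex.log_re,
      ← Complex.re_ofReal_mul, Complex.ofReal_pow]
  rw [hre, hmain, Complex.sub_re, Complex.re_ofReal_mul, Complex.I_re, Complex.div_ofNat_re,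
    Complex.add_re, hlog]
  ring

lemma re_evenZetaSeries_three (ha0 : 0 < a) (ha1 : a < 1) :
    (evenZetaSeries 3 a).re = -(a ^ 3 / 2) * Real.log (2 * Real.sin (π * a)) -
      3 * a ^ 2 / (4 * π) * (polylogExp 2 a).im - 3 * a / (4 * π ^ 2) * (polylogExp 3 a).re +
      3 / (8 * π ^ 3) * (polylogExp 4 a).im := by
  have hmoment : ((2 : ℕ) + 1) / (2 * π * I) * polylogMoment 2 1 a =
      -((3 * a ^ 2 / (2 * π) : ℝ) * (I * polylogExp 2 a)) +
        (3 * a / (2 * π ^ 2) : ℝ) * polylogExp 3 a +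
        (3 / (4 * π ^ 3) : ℝ) * (I * polylogExp 4 a) := by
    simp only [polylogMoment, ← div_div, Complex.div_I]
    push_cast
    linear_combination
      -(3 / (2 * π ^ 2)) * (a * polylogExp 3 a + I / (2 * π) * polylogExp 4 a) * Complex.I_sq
  rw [re_evenZetaSeries_ofReal even_two ha0 ha1, hmoment]
  simp only [Complex.add_re, Complex.neg_re, Complex.re_ofReal_mul, Complex.I_mul_re]
  ring

end RealAxis

end UpperHalfPlane

lemma ofReal_re_evenZetaSeries_ofReal (p : ℕ) (a : ℝ) :
    ((evenZetaSeries p a).re : ℂ) = evenZetaSeries p a :=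
  Complex.conj_eq_iff_re.mp (by rw [conj_evenZetaSeries, Complex.conj_ofReal])

lemma polylogExp_one_fourth (s : ℕ) : polylogExp s (1 / 4 : ℝ) = polylog s I := by
  have hexp : (2 * π * I * (1 / 4 : ℝ) : ℂ) = π / 2 * I := by
    push_cast
    ring
  rw [polylogExp, hexp, Complex.exp_pi_div_two_mul_I]

lemma tsum_riemannZeta_two_mul_div_eq_evenZetaSeries :
    ∑' n : ℕ, riemannZeta (2 * n) / ((2 * n + 3) * 16 ^ n) =
      64 * evenZetaSeries 3 (1 / 4 : ℝ) := by
  rw [evenZetaSeries, ← tsum_mul_left]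
  refine tsum_congr fun n ↦ ?_
  have hpow : ((1 / 4 : ℝ) : ℂ) ^ (2 * n + 3) = 1 / (64 * 16 ^ n) := by
    push_cast
    rw [one_div_pow, pow_add, pow_mul, mul_comm]
    norm_num
  rw [hpow]
  push_cast
  field_simp

theorem stmt6 :
    ∑' n : ℕ, riemannZeta (2 * n) / ((2 * n + 3) * 16 ^ n) =
      -(1 / 4) * (Real.log 2 : ℂ) + 9 * riemannZeta 3 / (8 * (π : ℂ) ^ 2) -
        3 * (catalanConst : ℂ) / (π : ℂ) + 24 * (dirichletBeta 4 : ℂ) / (π : ℂ) ^ 3 := by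
  have hlog : Real.log (2 * Real.sin (π * (1 / 4))) = Real.log 2 / 2 := by
    rw [mul_one_div, Real.sin_pi_div_four, mul_div_cancel₀ _ two_ne_zero, Real.log_sqrt zero_le_two]
  have hG : catalanConst = dirichletBeta 2 := rfl
  have hζ : ((polylog 3 I).re : ℂ) = -3 / 32 * riemannZeta 3 := by
    rw [re_polylog_I (by norm_num)]
    norm_num
  rw [tsum_riemannZeta_two_mul_div_eq_evenZetaSeries, ← ofReal_re_evenZetaSeries_ofReal,
    re_evenZetaSeries_three (by norm_num) (by norm_num), hlog, hG]
  simp only [polylogExp_one_fourth, im_polylog_I Nat.one_lt_ofNat]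
  push_cast
  rw [hζ]
  field_simp
  ring
end
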